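/- In the Zorn vector matrix algebra over the field F₂ with two elements, the triple (a, b, c) with a = [[0,(1,0,0)],[(1,0,0),1]], b = [[0,(0,1,0)],[(0,1,0),0]], c = [[0,(0,0,1)],[(0,0,1),0]] consists of elements of norm 1, satisfies ⟨b,1⟩ = ⟨c,1⟩ = ⟨a,b⟩ = ⟨a,c⟩ = ⟨b,c⟩ = ⟨ab,c⟩ = 0 and ⟨a,1⟩ ≠ 0, and the set {1, a, b, ab, c, ac, bc, (ab)c} is a basis of the algebra as an F₂-vector space. -/

import Mathlib

/-- Zorn vector matrices `[[a, α], [β, b]]` over a field `k`. -/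
@[ext]
structure Zorn (k : Type*) where
  a : k
  α : Fin 3 → k
  β : Fin 3 → k
  b : k

namespace Zorn

variable {k : Type*} [Field k]

/-- Dot product on `k³`. -/
def dot (u v : Fin 3 → k) : k := u 0 * v 0 + u 1 * v 1 + u 2 * v 2

/-- Cross product on `k³`. -/
def cross (u v : Fin 3 → k) : Fin 3 → k :=
  ![u 1 * v 2 - u 2 * v 1, u 2 * v 0 - u 0 * v 2, u 0 * v 1 - u 1 * v 0]

/-- Zorn vector matrix multiplication. -/
instance : Mul (Zorn k) :=
  ⟨fun x y =>
    ⟨x.a * y.a + dot x.α y.β,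
     fun i => x.a * y.α i + y.b * x.α i - cross x.β y.β i,
     fun i => y.a * x.β i + x.b * y.β i + cross x.α y.α i,
     dot x.β y.α + x.b * y.b⟩⟩

instance : One (Zorn k) := ⟨⟨1, 0, 0, 1⟩⟩
instance : Zero (Zorn k) := ⟨⟨0, 0, 0, 0⟩⟩
instance : Add (Zorn k) := ⟨fun x y => ⟨x.a + y.a, x.α + y.α, x.β + y.β, x.b + y.b⟩⟩
instance : Neg (Zorn k) := ⟨fun x => ⟨-x.a, -x.α, -x.β, -x.b⟩⟩
instance : SMul k (Zorn k) := ⟨fun c x => ⟨c * x.a, c • x.α, c • x.β, c * x.b⟩⟩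

/-- The norm (determinant) of a Zorn vector matrix. -/
def N (x : Zorn k) : k := x.a * x.b - dot x.α x.β

/-- The bilinear form associated with the norm. -/
def polarN (x y : Zorn k) : k := N (x + y) - N x - N y


@[simp] theorem add_a' (x y : Zorn k) : (x + y).a = x.a + y.a := rfl
@[simp] theorem add_alpha' (x y : Zorn k) : (x + y).α = x.α + y.α := rfl
@[simp] theorem add_beta' (x y : Zorn k) : (x + y).β = x.β + y.β := rfl
@[simp] theorem add_b' (x y : Zorn k) : (x + y).b = x.b + y.b := rfl
@[simp] theorem neg_a' (x : Zorn k) : (-x).a = -x.a := rfl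
@[simp] theorem neg_alpha' (x : Zorn k) : (-x).α = -x.α := rfl
@[simp] theorem neg_beta' (x : Zorn k) : (-x).β = -x.β := rfl
@[simp] theorem neg_b' (x : Zorn k) : (-x).b = -x.b := rfl
@[simp] theorem zero_a' : (0 : Zorn k).a = 0 := rfl
@[simp] theorem zero_alpha' : (0 : Zorn k).α = 0 := rfl
@[simp] theorem zero_beta' : (0 : Zorn k).β = 0 := rfl
@[simp] theorem zero_b' : (0 : Zorn k).b = 0 := rfl
@[simp] theorem smul_a' (c : k) (x : Zorn k) : (c • x).a = c * x.a := rfl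
@[simp] theorem smul_alpha' (c : k) (x : Zorn k) : (c • x).α = c • x.α := rfl
@[simp] theorem smul_beta' (c : k) (x : Zorn k) : (c • x).β = c • x.β := rfl
@[simp] theorem smul_b' (c : k) (x : Zorn k) : (c • x).b = c * x.b := rfl

instance : AddCommGroup (Zorn k) where
  add := (· + ·)
  zero := 0
  neg := Neg.neg
  add_assoc x y z := by
    show Zorn.mk _ _ _ _ = Zorn.mk _ _ _ _
    ext i <;> simp <;> ring
  zero_add x := by
    show Zorn.mk _ _ _ _ = x
    ext i <;> simp
  add_zero x := by
    show Zorn.mk _ _ _ _ = x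
    ext i <;> simp
  add_comm x y := by
    show Zorn.mk _ _ _ _ = Zorn.mk _ _ _ _
    ext i <;> simp <;> ring
  neg_add_cancel x := by
    show Zorn.mk _ _ _ _ = Zorn.mk _ _ _ _
    ext i <;> simp
  nsmul := nsmulRec
  zsmul := zsmulRec

instance : Module k (Zorn k) where
  smul := (· • ·)
  one_smul x := by
    show Zorn.mk _ _ _ _ = x
    ext i <;> simp
  mul_smul c d x := by
    show Zorn.mk _ _ _ _ = Zorn.mk _ _ _ _
    ext i <;> simp <;> ring
  smul_zero c := by
    show Zorn.mk _ _ _ _ = Zorn.mk _ _ _ _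
    ext i <;> simp
  smul_add c x y := by
    show Zorn.mk _ _ _ _ = Zorn.mk _ _ _ _
    ext i <;> simp <;> ring
  add_smul c d x := by
    show Zorn.mk _ _ _ _ = Zorn.mk _ _ _ _
    ext i <;> simp <;> ring
  zero_smul x := by
    show Zorn.mk _ _ _ _ = Zorn.mk _ _ _ _
    ext i <;> simp

/-- The doubling triple `(a, b, c)` from Lemma 5 over `F₂`: the stated norm and bilinear
form identities hold, and `{1, a, b, ab, c, ac, bc, (ab)c}` is an `F₂`-basis. -/
theorem doubling_triple_F2 :
    let a : Zorn (ZMod 2) := ⟨0, ![1, 0, 0], ![1, 0, 0], 1⟩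
    let b : Zorn (ZMod 2) := ⟨0, ![0, 1, 0], ![0, 1, 0], 0⟩
    let c : Zorn (ZMod 2) := ⟨0, ![0, 0, 1], ![0, 0, 1], 0⟩
    N a = 1 ∧ N b = 1 ∧ N c = 1 ∧
    polarN b 1 = 0 ∧ polarN c 1 = 0 ∧ polarN a b = 0 ∧ polarN a c = 0 ∧
    polarN b c = 0 ∧ polarN (a * b) c = 0 ∧ polarN a 1 ≠ 0 ∧
    (LinearIndependent (ZMod 2)
        ![(1 : Zorn (ZMod 2)), a, b, a * b, c, a * c, b * c, (a * b) * c] ∧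
      Submodule.span (ZMod 2)
        (Set.range ![(1 : Zorn (ZMod 2)), a, b, a * b, c, a * c, b * c, (a * b) * c]) = ⊤) := by
  intro a b c
  have hab : a * b = ⟨0, ![0, 0, 1], ![0, 1, 1], 0⟩ := by
    ext i <;> (try fin_cases i) <;> decide
  have hac : a * c = ⟨0, ![0, 1, 0], ![0, 1, 1], 0⟩ := by
    ext i <;> (try fin_cases i) <;> decide
  have hbc : b * c = ⟨0, ![1, 0, 0], ![1, 0, 0], 0⟩ := by
    ext i <;> (try fin_cases i) <;> decide
  have habc : (a * b) * c = ⟨1, ![1, 0, 0], ![0, 0, 0], 1⟩ := by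
    rw [hab]
    ext i <;> (try fin_cases i) <;> decide
  have hsum (g : Fin 8 → ZMod 2) :
      ∑ i, g i • ![(1 : Zorn (ZMod 2)), a, b, a * b, c, a * c, b * c, (a * b) * c] i =
        ⟨g 0 + g 7, ![g 1 + g 6 + g 7, g 2 + g 5, g 3 + g 4],
          ![g 1 + g 6, g 2 + g 3 + g 5, g 3 + g 4 + g 5], g 0 + g 1 + g 7⟩ := by
    rw [habc, hab, hac, hbc, Fin.sum_univ_eight]
    have h1 : (1 : Zorn (ZMod 2)) = ⟨1, 0, 0, 1⟩ := rfl
    ext i <;> (try fin_cases i) <;> simp [a, b, c, h1]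
  refine ⟨by decide, by decide, by decide, by decide, by decide, by decide, by decide,
    by decide, by decide, by decide, ?_, ?_⟩
  · rw [Fintype.linearIndependent_iff]
    intro g hg
    rw [hsum] at hg
    have hp : g 0 + g 7 = 0 := congrArg Zorn.a hg
    have hq : g 0 + g 1 + g 7 = 0 := congrArg Zorn.b hg
    have hα₀ : g 1 + g 6 + g 7 = 0 := congrFun (congrArg Zorn.α hg) 0
    have hα₁ : g 2 + g 5 = 0 := congrFun (congrArg Zorn.α hg) 1
    have hα₂ : g 3 + g 4 = 0 := congrFun (congrArg Zorn.α hg) 2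
    have hβ₀ : g 1 + g 6 = 0 := congrFun (congrArg Zorn.β hg) 0
    have hβ₁ : g 2 + g 3 + g 5 = 0 := congrFun (congrArg Zorn.β hg) 1
    have hβ₂ : g 3 + g 4 + g 5 = 0 := congrFun (congrArg Zorn.β hg) 2
    intro i
    fin_cases i <;> dsimp
    · linear_combination hp - hα₀ + hβ₀
    · linear_combination hq - hp
    · linear_combination hα₁ - hβ₂ + hα₂
    · linear_combination hβ₁ - hα₁
    · linear_combination hα₂ - hβ₁ + hα₁
    · linear_combination hβ₂ - hα₂
    · linear_combination hβ₀ - hq + hp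
    · linear_combination hα₀ - hβ₀
  · refine eq_top_iff.mpr fun x _ => (Submodule.mem_span_range_iff_exists_fun _).mpr ?_
    refine ⟨![x.a - (x.α 0 - x.β 0), x.b - x.a, x.α 1 - (x.β 2 - x.α 2), x.β 1 - x.α 1,
      x.α 2 - (x.β 1 - x.α 1), x.β 2 - x.α 2, x.β 0 - (x.b - x.a), x.α 0 - x.β 0], ?_⟩
    rw [hsum]
    ext i <;> (try fin_cases i) <;> simp

end Zorn
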